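/- Let S be a factorizable inverse monoid with semilattice of idempotents E and group of units G such that the natural connection θ is a dual isomorphism from E onto a sublattice of L(G). If e₁, e₂, f ∈ E are such that e₁ is central in e₂↑ and f is central in S, then the idempotent e₁f is central in (e₂f)↑. -/

import Mathlib

/-- An inverse monoid: a monoid in which every element `a` has an inverse `a⁻¹`
satisfying `a * a⁻¹ * a = a` and `a⁻¹ * a * a⁻¹ = a⁻¹`, and this inverse is unique. -/
class InverseMonoid (S : Type*) extends Monoid S, Inv S where
  mul_inv_mul : ∀ a : S, a * a⁻¹ * a = a
  inv_mul_inv : ∀ a : S, a⁻¹ * a * a⁻¹ = a⁻¹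
  inv_unique : ∀ a b : S, a * b * a = a → b * a * b = b → b = a⁻¹

/-- An inverse monoid with a (two-sided absorbing) zero element. -/
class InverseMonoidWithZero (S : Type*) extends InverseMonoid S, Zero S where
  zero_mul : ∀ a : S, 0 * a = 0
  mul_zero : ∀ a : S, a * 0 = 0

/-- The natural partial order on an inverse monoid: `a ≤ b` iff `a = e * b`
for some idempotent `e`. -/
def NatLe {S : Type*} [Monoid S] (a b : S) : Prop :=
  ∃ e : S, IsIdempotentElem e ∧ a = e * b

/-- The filter `e↑ = {s | e ≤ s}` generated by `e`. -/
def upfilter {S : Type*} [Monoid S] (e : S) : Set S := {s | NatLe e s}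

/-- `c` is central in (a subset) `T`: it belongs to `T` and commutes with all elements of `T`. -/
def CentralIn {S : Type*} [Mul S] (T : Set S) (c : S) : Prop :=
  c ∈ T ∧ ∀ s ∈ T, c * s = s * c

/-- A monoid is factorizable if every element is a product of an idempotent and a unit. -/
def Factorizable (S : Type*) [Monoid S] : Prop :=
  ∀ s : S, ∃ e g : S, IsIdempotentElem e ∧ IsUnit g ∧ s = e * g

/-- The natural connection `θ`: for an (idempotent) `e`, the subgroup
`eθ = {g ∈ G : e * g = e}` of the group of units. -/
def natconn {S : Type*} [Monoid S] (e : S) : Subgroup Sˣ where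
  carrier := {g : Sˣ | e * (g : S) = e}
  one_mem' := by simp
  mul_mem' := by
    intro a b ha hb
    simp only [Set.mem_setOf_eq, Units.val_mul] at *
    rw [← mul_assoc, ha, hb]
  inv_mem' := by
    intro a ha
    simp only [Set.mem_setOf_eq] at *
    nth_rewrite 1 [← ha]
    rw [mul_assoc, ← Units.val_mul, mul_inv_cancel, Units.val_one, mul_one]

/-- The natural connection is a dual isomorphism from the idempotents onto a
sublattice of the lattice of subgroups of the group of units: it is injective on
idempotents, order-reversing in both directions, and its image is closed under
joins and meets of subgroups. -/
def NatconnDualIso (S : Type*) [Monoid S] : Prop :=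
  (∀ e f : S, IsIdempotentElem e → IsIdempotentElem f → natconn e = natconn f → e = f) ∧
  (∀ e f : S, IsIdempotentElem e → IsIdempotentElem f →
    (NatLe e f ↔ natconn f ≤ natconn e)) ∧
  (∀ e f : S, IsIdempotentElem e → IsIdempotentElem f →
    (∃ h : S, IsIdempotentElem h ∧ natconn h = natconn e ⊔ natconn f) ∧
    (∃ h : S, IsIdempotentElem h ∧ natconn h = natconn e ⊓ natconn f))

/-- `j` is the join (least upper bound) of `e` and `f` with respect to the natural order. -/
def IsNatJoin {S : Type*} [Monoid S] (e f j : S) : Prop :=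
  NatLe e j ∧ NatLe f j ∧ ∀ x : S, NatLe e x → NatLe f x → NatLe j x

/-- `F_{e,f} = f · e↑`. -/
def Fef {S : Type*} [Monoid S] (e f : S) : Set S := (f * ·) '' upfilter e

/-- `UF_{e,f}`: the group of units of the monoid `F_{e,f}` (whose identity is `f`). -/
def UFef {S : Type*} [Monoid S] (e f : S) : Set S :=
  {x ∈ Fef e f | ∃ y ∈ Fef e f, x * y = f ∧ y * x = f}

/-- The centre of a subset `T`. -/
def ZIn {S : Type*} [Mul S] (T : Set S) : Set S := {x ∈ T | ∀ y ∈ T, x * y = y * x}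

/-- Two subsets are isomorphic as semigroups (with the induced multiplication). -/
def SubIso {S : Type*} [Mul S] (A B : Set S) : Prop :=
  ∃ φ : S → S, Set.BijOn φ A B ∧ ∀ a ∈ A, ∀ b ∈ A, φ (a * b) = φ a * φ b

/-- A subcentral idempotent series between `0` and `a`. -/
def IsSubcentralSeriesBetween {S : Type*} [Monoid S] [Zero S] (n : ℕ) (c : ℕ → S) (a : S) :
    Prop :=
  c 0 = 0 ∧ c n = a ∧ (∀ i ≤ n, IsIdempotentElem (c i)) ∧
    ∀ i < n, CentralIn (upfilter (c i)) (c (i + 1))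

/-- A subcentral idempotent series of `S` (between `0` and `1`). -/
def IsSubcentralSeries {S : Type*} [Monoid S] [Zero S] (n : ℕ) (c : ℕ → S) : Prop :=
  IsSubcentralSeriesBetween n c 1

/-- A central idempotent series of `S`. -/
def IsCentralSeries {S : Type*} [Monoid S] [Zero S] (n : ℕ) (c : ℕ → S) : Prop :=
  c 0 = 0 ∧ c n = 1 ∧ (∀ i ≤ n, IsIdempotentElem (c i)) ∧
    (∀ i < n, NatLe (c i) (c (i + 1))) ∧
    ∀ i < n, CentralIn Set.univ (c (i + 1))

/-- A subcentral idempotent: one occurring in some subcentral idempotent series of `S`. -/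
def IsSubcentralIdem {S : Type*} [Monoid S] [Zero S] (e : S) : Prop :=
  ∃ (n : ℕ) (c : ℕ → S), IsSubcentralSeries n c ∧ ∃ i ≤ n, c i = e

/-- A `G`-nilpotent series: a chain of central idempotents from `0` to `1` with
`F_{eᵢ,eᵢ₊₁} ⊆ Z(F_{0,eᵢ₊₁})`. -/
def GNilpotentSeries {S : Type*} [Monoid S] [Zero S] (n : ℕ) (c : ℕ → S) : Prop :=
  c 0 = 0 ∧ c n = 1 ∧ (∀ i ≤ n, IsIdempotentElem (c i) ∧ CentralIn Set.univ (c i)) ∧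
    (∀ i < n, NatLe (c i) (c (i + 1))) ∧
    ∀ i < n, Fef (c i) (c (i + 1)) ⊆ ZIn (Fef 0 (c (i + 1)))

/-- A `G`-solvable series: a chain of central idempotents from `0` to `1` with
each `F_{eᵢ,eᵢ₊₁}` commutative. -/
def GSolvableSeries {S : Type*} [Monoid S] [Zero S] (n : ℕ) (c : ℕ → S) : Prop :=
  c 0 = 0 ∧ c n = 1 ∧ (∀ i ≤ n, IsIdempotentElem (c i) ∧ CentralIn Set.univ (c i)) ∧
    (∀ i < n, NatLe (c i) (c (i + 1))) ∧
    ∀ i < n, ∀ x ∈ Fef (c i) (c (i + 1)), ∀ y ∈ Fef (c i) (c (i + 1)), x * y = y * x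

/-- `S` is `G`-nilpotent. -/
def GNilpotent (S : Type*) [Monoid S] [Zero S] : Prop :=
  ∃ (n : ℕ) (c : ℕ → S), GNilpotentSeries n c

/-- `S` is `G`-solvable. -/
def GSolvable (S : Type*) [Monoid S] [Zero S] : Prop :=
  ∃ (n : ℕ) (c : ℕ → S), GSolvableSeries n c

/-- Two idempotent series are isomorphic: same length, and a one-to-one correspondence
between their factors under which corresponding factors are isomorphic. -/
def SeriesIso {S : Type*} [Monoid S] (n : ℕ) (c : ℕ → S) (n' : ℕ) (d : ℕ → S) : Prop :=
  n = n' ∧ ∃ σ : ℕ → ℕ, Set.BijOn σ {i | i < n} {i | i < n'} ∧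
    ∀ i < n, SubIso (Fef (c i) (c (i + 1))) (Fef (d (σ i)) (d (σ i + 1)))

/-- A composition series (for a kind `P` of series): it has no repeated terms, and any
refinement of it (of the same kind) only repeats its terms. -/
def IsCompositionOf {S : Type*} (P : ℕ → (ℕ → S) → Prop) (n : ℕ) (c : ℕ → S) : Prop :=
  P n c ∧ (∀ i ≤ n, ∀ j ≤ n, c i = c j → i = j) ∧
    ∀ (m : ℕ) (d : ℕ → S), P m d → (∀ i ≤ n, ∃ j ≤ m, d j = c i) →
      ∀ j ≤ m, ∃ i ≤ n, d j = c i

/-!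
Two observations about idempotents and units drive the proof. First, an element of `a↑` in a
factorizable inverse monoid is `e * g` with `e` idempotent and `g ∈ aθ`; as idempotents commute, an
idempotent commutes with all of `a↑` as soon as it commutes with the units in `aθ`. Second, a unit
`g` with `f * g = f` also satisfies `g * f = f`, so it commutes with every idempotent below `f`.
Since `θ` turns the meet `e₂ * f` into the join `e₂θ ⊔ fθ`, and the units commuting with `e₁ * f`
form a subgroup, it is enough to check `e₂θ`, where centrality of `e₁` and `f` applies, and `fθ`,
where the second observation applies to `e₁ * f ≤ f`.
-/

theorem mem_units_centralizer_singleton {M : Type*} [Monoid M] {c : M} {g : Mˣ} :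
    g ∈ (Submonoid.centralizer {c}).units ↔ Commute c g := by
  simp only [Submonoid.mem_units_iff, Submonoid.mem_centralizer_iff, Set.mem_singleton_iff,
    forall_eq]
  exact and_iff_left_of_imp Commute.units_inv_right

namespace InverseMonoid

variable {S : Type*} [InverseMonoid S] {a c e f s : S}

protected theorem inv_inv (a : S) : a⁻¹⁻¹ = a :=
  (inv_unique a⁻¹ a (inv_mul_inv a) (mul_inv_mul a)).symm

theorem inv_eq_self_of_isIdempotentElem (he : IsIdempotentElem e) : e⁻¹ = e :=
  (inv_unique e e (by rw [he.eq, he.eq]) (by rw [he.eq, he.eq])).symm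

theorem isIdempotentElem_of_inv (h : IsIdempotentElem a⁻¹) : IsIdempotentElem a := by
  rwa [← inv_eq_self_of_isIdempotentElem h, InverseMonoid.inv_inv] at h

theorem mul_inv_mul_eq_inv_of_isIdempotentElem (he : IsIdempotentElem e) (hf : IsIdempotentElem f) :
    f * (e * f)⁻¹ * e = (e * f)⁻¹ := by
  apply inv_unique (e * f)
  · calc e * f * (f * (e * f)⁻¹ * e) * (e * f)
        = e * (f * f) * (e * f)⁻¹ * (e * e * f) := by simp only [mul_assoc]
      _ = e * f := by rw [hf.eq, he.eq, mul_inv_mul]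
  · calc f * (e * f)⁻¹ * e * (e * f) * (f * (e * f)⁻¹ * e)
        = f * ((e * f)⁻¹ * (e * e * (f * f)) * (e * f)⁻¹) * e := by simp only [mul_assoc]
      _ = f * (e * f)⁻¹ * e := by rw [hf.eq, he.eq, inv_mul_inv]

theorem isIdempotentElem_mul (he : IsIdempotentElem e) (hf : IsIdempotentElem f) :
    IsIdempotentElem (e * f) := by
  have hinv := mul_inv_mul_eq_inv_of_isIdempotentElem he hf
  refine isIdempotentElem_of_inv ?_
  calc (e * f)⁻¹ * (e * f)⁻¹
      = f * (e * f)⁻¹ * e * (f * (e * f)⁻¹ * e) := by rw [hinv]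
    _ = f * ((e * f)⁻¹ * (e * f) * (e * f)⁻¹) * e := by simp only [mul_assoc]
    _ = (e * f)⁻¹ := by rw [inv_mul_inv, hinv]

theorem commute_of_isIdempotentElem (he : IsIdempotentElem e) (hf : IsIdempotentElem f) :
    Commute e f :=
  calc e * f = (e * f)⁻¹ := (inv_eq_self_of_isIdempotentElem (isIdempotentElem_mul he hf)).symm
    _ = f * (e * f)⁻¹ * e := (mul_inv_mul_eq_inv_of_isIdempotentElem he hf).symm
    _ = f * (e * f) * e := by rw [inv_eq_self_of_isIdempotentElem (isIdempotentElem_mul he hf)]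
    _ = f * e * (f * e) := by simp only [mul_assoc]
    _ = f * e := isIdempotentElem_mul hf he

theorem natLe_iff_mul_eq_left (he : IsIdempotentElem e) : NatLe e s ↔ e * s = e := by
  refine ⟨?_, fun h ↦ ⟨e, he, h.symm⟩⟩
  rintro ⟨k, hk, hks⟩
  have hke : k * e = e := by rw [hks, ← mul_assoc, hk.eq]
  calc e * s = e * k * s := by rw [(commute_of_isIdempotentElem he hk).eq, hke]
    _ = e := by rw [mul_assoc, ← hks, he.eq]

theorem unit_mul_eq_of_mem_natconn (hf : IsIdempotentElem f) {g : Sˣ} (hg : g ∈ natconn f) :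
    g * f = f := by
  have hfg : f * ↑g = f := hg
  have hidem : IsIdempotentElem (g * f) := by
    rw [IsIdempotentElem, mul_assoc, ← mul_assoc f, hfg, hf.eq]
  calc g * f = g * f * f := by rw [mul_assoc, hf.eq]
    _ = f * (g * f) := commute_of_isIdempotentElem hidem hf
    _ = f := by rw [← mul_assoc, hfg, hf.eq]

theorem exists_eq_mul_of_mem_upfilter (hfact : Factorizable S) (ha : IsIdempotentElem a)
    (hs : s ∈ upfilter a) : ∃ e : S, ∃ g ∈ natconn a, IsIdempotentElem e ∧ s = e * g := by
  obtain ⟨e, _, he, ⟨g, rfl⟩, rfl⟩ := hfact s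
  have hae : a * e * g = a := by
    rw [mul_assoc]
    exact (natLe_iff_mul_eq_left ha).1 hs
  have hcomm : e * a = a * e := commute_of_isIdempotentElem he ha
  have hea : e * a = a :=
    calc e * a = e * (a * e * g) := by rw [hae]
      _ = a * (e * e) * g := by rw [← mul_assoc, ← mul_assoc, hcomm, mul_assoc a]
      _ = a := by rw [he.eq, hae]
  have hag : a * g = a := by rwa [← hcomm, hea] at hae
  exact ⟨e, g, hag, he, rfl⟩

theorem forall_mem_upfilter_commute_iff (hfact : Factorizable S) (ha : IsIdempotentElem a)
    (hc : IsIdempotentElem c) :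
    (∀ s ∈ upfilter a, Commute c s) ↔ natconn a ≤ (Submonoid.centralizer {c}).units := by
  refine ⟨fun h g hg ↦ ?_, fun h s hs ↦ ?_⟩
  · exact mem_units_centralizer_singleton.2 (h g ((natLe_iff_mul_eq_left ha).2 hg))
  · obtain ⟨e, g, hg, he, rfl⟩ := exists_eq_mul_of_mem_upfilter hfact ha hs
    exact (commute_of_isIdempotentElem hc he).mul_right (mem_units_centralizer_singleton.1 (h hg))

theorem natconn_le_units_centralizer_of_natLe (hc : IsIdempotentElem c) (hf : IsIdempotentElem f)
    (hcf : NatLe c f) : natconn f ≤ (Submonoid.centralizer {c}).units := by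
  intro g hg
  have hcf_eq : c * f = c := (natLe_iff_mul_eq_left hc).1 hcf
  have hfc : f * c = c := by rw [← (commute_of_isIdempotentElem hc hf).eq, hcf_eq]
  have hfg : f * g = f := hg
  refine mem_units_centralizer_singleton.2 ?_
  calc c * g = c := by rw [← hcf_eq, mul_assoc, hfg]
    _ = g * c := by rw [← hfc, ← mul_assoc, unit_mul_eq_of_mem_natconn hf hg]

theorem natconn_mul (hθ : NatconnDualIso S) (he : IsIdempotentElem e) (hf : IsIdempotentElem f) :
    natconn (e * f) = natconn e ⊔ natconn f := by
  obtain ⟨-, hle, hlattice⟩ := hθ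
  have hef := isIdempotentElem_mul he hf
  apply le_antisymm
  · obtain ⟨⟨j, hj, hsup⟩, -⟩ := hlattice e f he hf
    have hje : j * e = j := (natLe_iff_mul_eq_left hj).1 ((hle j e hj he).2 (hsup ▸ le_sup_left))
    have hjf : j * f = j := (natLe_iff_mul_eq_left hj).1 ((hle j f hj hf).2 (hsup ▸ le_sup_right))
    rw [← hsup]
    exact (hle j (e * f) hj hef).1 ⟨j, hj, by rw [← mul_assoc, hje, hjf]⟩
  · have hefe : e * f = f * e := commute_of_isIdempotentElem he hf
    exact sup_le ((hle _ e hef he).1 ⟨f, hf, hefe⟩) ((hle _ f hef hf).1 ⟨e, he, rfl⟩)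

end InverseMonoid

open InverseMonoid in
theorem stmt_3_general {S : Type*} [InverseMonoid S] (hfact : Factorizable S) {e₁ e₂ f : S}
    (he₁ : IsIdempotentElem e₁) (he₂ : IsIdempotentElem e₂) (hf : IsIdempotentElem f)
    (hsup : natconn (e₂ * f) ≤ natconn e₂ ⊔ natconn f)
    (hc₁ : CentralIn (upfilter e₂) e₁) (hcf : ∀ s ∈ upfilter e₂, Commute f s) :
    IsIdempotentElem (e₁ * f) ∧ CentralIn (upfilter (e₂ * f)) (e₁ * f) := by
  have he₁f := isIdempotentElem_mul he₁ hf
  have hmem : e₁ * f ∈ upfilter (e₂ * f) := by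
    obtain ⟨k, hk, he₂k⟩ := hc₁.1
    exact ⟨k, hk, by rw [he₂k, mul_assoc]⟩
  have he₂_le : natconn e₂ ≤ (Submonoid.centralizer {e₁ * f}).units :=
    (forall_mem_upfilter_commute_iff hfact he₂ he₁f).1
      fun s hs ↦ Commute.mul_left (hc₁.2 s hs) (hcf s hs)
  have hf_le : natconn f ≤ (Submonoid.centralizer {e₁ * f}).units :=
    natconn_le_units_centralizer_of_natLe he₁f hf ⟨e₁, he₁, rfl⟩
  exact ⟨he₁f, hmem, (forall_mem_upfilter_commute_iff hfact (isIdempotentElem_mul he₂ hf) he₁f).2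
    (hsup.trans (sup_le he₂_le hf_le))⟩

/-- In a factorizable inverse monoid whose natural connection is a dual
isomorphism onto a sublattice of the lattice of subgroups of the group of units:
if `e₁` is central in `e₂↑` and `f` is central in `S`, then the idempotent `e₁f` is
central in `(e₂f)↑`. -/
theorem stmt_3 {S : Type*} [InverseMonoid S] (hfact : Factorizable S)
    (hθ : NatconnDualIso S) (e₁ e₂ f : S)
    (he₁ : IsIdempotentElem e₁) (he₂ : IsIdempotentElem e₂) (hf : IsIdempotentElem f)
    (hc₁ : CentralIn (upfilter e₂) e₁) (hcf : CentralIn Set.univ f) :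
    IsIdempotentElem (e₁ * f) ∧ CentralIn (upfilter (e₂ * f)) (e₁ * f) := by
  exact stmt_3_general hfact he₁ he₂ hf (InverseMonoid.natconn_mul hθ he₂ hf).le hc₁
    fun s _ ↦ hcf.2 s trivial
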